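/- arXiv:2205.08388 — 2 statements merged into one kernel-verified Lean document; each statement's English description precedes it below -/
import Mathlib

section
/- Fix p with 1 < p ≤ ∞ and k > 0. The set A_k of all u ∈ L²(ℝ²;ℝ²) for which there exists ω ∈ L¹(ℝ²) ∩ L^p(ℝ²) with ‖ω‖_{L¹(ℝ²)} ≤ k and ‖ω‖_{L^p(ℝ²)} ≤ k representing the distributional vorticity of u is closed in L²(ℝ²;ℝ²). Consequently, the set of all u ∈ L²(ℝ²;ℝ²) whose distributional vorticity is represented by some ω ∈ L¹(ℝ²) ∩ L^p(ℝ²) is a Borel subset of L²(ℝ²;ℝ²). -/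
open MeasureTheory ENNReal

local notation "E" => EuclideanSpace ℝ (Fin 2)

/-- `ω` represents the distributional vorticity (curl) of the square-integrable
vector field `u` on `ℝ²`:
`∫ ω φ = ∫ (u¹ ∂₂φ - u² ∂₁φ)` for all `φ ∈ C_c^∞(ℝ²)`. -/
def IsDistributionalVorticity (u : Lp E 2 (volume : Measure E)) (ω : E → ℝ) : Prop :=
  ∀ φ : E → ℝ, ContDiff ℝ (⊤ : ℕ∞) φ → HasCompactSupport φ →
    ∫ x : E, ω x * φ x =
      ∫ x : E, (u x 0 * fderiv ℝ φ x (EuclideanSpace.single 1 1) -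
        u x 1 * fderiv ℝ φ x (EuclideanSpace.single 0 1))

/-!
Let `u` be an `L²` limit of fields of the class. The admissible vorticities of the fields within
`1 / (n + 1)` of `u` form a decreasing sequence of convex sets, bounded in `L¹`. Almost minimizing
the strictly convex functional `∫ (√(1 + |ω|²) - 1)` over them selects, after passing to a
subsequence, vorticities `ω n` that converge almost everywhere: the unit normals
`(1, ω n) / √(1 + |ω n|²)` are Cauchy in `L²`, and the `L¹` bound keeps `ω n` from escaping to
infinity. By Fatou the limit satisfies the same norm bounds, and since `p > 1` the `L^p` bound makes
`ω n * φ` uniformly integrable for every test function `φ`, so the vorticity identity survives in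
the limit. The class without bounds is the union of the closed classes with bound `n : ℕ`.
-/

open Bornology Distributions Filter NormedSpace TopologicalSpace Topology

theorem exists_minimizing_selection {X : Type*} {S : ℕ → Set X} (hanti : Antitone S)
    (hne : ∀ n, (S n).Nonempty) {Φ : X → ℝ} (hΦ : IsBounded (Φ '' S 0)) :
    ∃ (w : ℕ → X) (L : ℝ), (∀ n, w n ∈ S n) ∧ Tendsto (fun n => Φ (w n)) atTop (𝓝 L) ∧
      ∀ c < L, ∀ᶠ n in atTop, ∀ f ∈ S n, c < Φ f := by
  have himage : ∀ n, Φ '' S n ⊆ Φ '' S 0 := fun n => Set.image_mono (hanti n.zero_le)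
  have hbelow : ∀ n, BddBelow (Φ '' S n) := fun n => hΦ.bddBelow.mono (himage n)
  set I : ℕ → ℝ := fun n => sInf (Φ '' S n)
  have hI_mono : Monotone I := fun m n hmn =>
    csInf_le_csInf (hbelow m) ((hne n).image Φ) (Set.image_mono (hanti hmn))
  have hI_bdd : BddAbove (Set.range I) := by
    obtain ⟨C, hC⟩ := hΦ.bddAbove
    refine ⟨C, Set.forall_mem_range.2 fun n => ?_⟩
    obtain ⟨y, hy⟩ := (hne n).image Φ
    exact (csInf_le (hbelow n) hy).trans (hC (himage n hy))
  have hI_lim : Tendsto I atTop (𝓝 (⨆ n, I n)) := tendsto_atTop_ciSup hI_mono hI_bdd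
  have hnear : ∀ n : ℕ, ∃ f ∈ S n, Φ f < I n + 1 / ((n : ℝ) + 1) := fun n => by
    obtain ⟨_, ⟨f, hf, rfl⟩, hlt⟩ := exists_lt_of_csInf_lt ((hne n).image Φ)
      (lt_add_of_pos_right (I n) (Nat.one_div_pos_of_nat (α := ℝ) (n := n)))
    exact ⟨f, hf, hlt⟩
  choose w hwS hwI using hnear
  refine ⟨w, ⨆ n, I n, hwS, ?_, fun c hc => ?_⟩
  · refine tendsto_of_tendsto_of_tendsto_of_le_of_le hI_lim
      (by simpa using hI_lim.add (tendsto_one_div_add_atTop_nhds_zero_nat (𝕜 := ℝ)))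
      (fun n => csInf_le (hbelow n) ⟨w n, hwS n, rfl⟩) fun n => (hwI n).le
  · filter_upwards [hI_lim.eventually_const_lt hc] with n hn f hf
    exact hn.trans_le (csInf_le (hbelow n) ⟨f, hf, rfl⟩)

theorem exists_cauchySeq_selection {X M : Type*} [AddCommGroup X] [Module ℝ X]
    [PseudoMetricSpace M] {S : ℕ → Set X} (hanti : Antitone S) (hne : ∀ n, (S n).Nonempty)
    (hconv : ∀ n, Convex ℝ (S n)) {Φ : X → ℝ} (hΦ : IsBounded (Φ '' S 0)) {V : X → M} {C : ℝ}
    (hC : 0 ≤ C)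
    (hV : ∀ f ∈ S 0, ∀ g ∈ S 0,
      dist (V f) (V g) ^ 2 ≤ C * (Φ f + Φ g - 2 * Φ (midpoint ℝ f g))) :
    ∃ w : ℕ → X, (∀ n, w n ∈ S n) ∧ CauchySeq fun n => V (w n) := by
  obtain ⟨w, L, hwS, hwL, hlower⟩ := exists_minimizing_selection hanti hne hΦ
  refine ⟨w, hwS, Metric.cauchySeq_iff.2 fun ε hε => ?_⟩
  set δ := ε ^ 2 / (4 * C + 1)
  have hδ : 0 < δ := by positivity
  obtain ⟨N, hN, hN'⟩ := ((hlower (L - δ) (by linarith)).and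
    (eventually_forall_ge_atTop.2 (hwL.eventually_lt_const (by linarith : L < L + δ)))).exists
  refine ⟨N, fun m hm n hn => lt_of_pow_lt_pow_left₀ 2 hε.le ?_⟩
  have hmid : midpoint ℝ (w m) (w n) ∈ S N :=
    (hconv N).midpoint_mem (hanti hm (hwS m)) (hanti hn (hwS n))
  calc dist (V (w m)) (V (w n)) ^ 2
      ≤ C * (Φ (w m) + Φ (w n) - 2 * Φ (midpoint ℝ (w m) (w n))) :=
        hV _ (hanti m.zero_le (hwS m)) _ (hanti n.zero_le (hwS n))
    _ ≤ C * (4 * δ) := by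
        gcongr
        linarith [hN _ hmid, hN' m hm, hN' n hn]
    _ < (4 * C + 1) * δ := by linarith
    _ = ε ^ 2 := mul_div_cancel₀ _ (by positivity)

section UnitNormal

theorem norm_mul_norm_mul_sq_norm_normalize_sub_normalize {F : Type*} [NormedAddCommGroup F]
    [InnerProductSpace ℝ F] (x y : F) :
    ‖x‖ * ‖y‖ * ‖NormedSpace.normalize x - NormedSpace.normalize y‖ ^ 2 =
      (‖x‖ + ‖y‖) ^ 2 - ‖x + y‖ ^ 2 := by
  rcases eq_or_ne x 0 with rfl | hx
  · simp
  rcases eq_or_ne y 0 with rfl | hy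
  · simp
  rw [norm_sub_sq_real, norm_add_sq_real, norm_normalize hx, norm_normalize hy,
    NormedSpace.normalize, NormedSpace.normalize, real_inner_smul_left, real_inner_smul_right]
  have := norm_ne_zero_iff.2 hx
  have := norm_ne_zero_iff.2 hy
  field_simp
  ring

theorem sq_norm_normalize_sub_normalize_le {F : Type*} [NormedAddCommGroup F]
    [InnerProductSpace ℝ F] {x y : F} (hx : 1 ≤ ‖x‖) (hy : 1 ≤ ‖y‖) :
    ‖NormedSpace.normalize x - NormedSpace.normalize y‖ ^ 2 ≤ 4 * (‖x‖ + ‖y‖ - ‖x + y‖) := by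
  have hgap : 0 ≤ ‖x‖ + ‖y‖ - ‖x + y‖ := sub_nonneg.2 (norm_add_le x y)
  refine le_of_mul_le_mul_left ?_ (by positivity : 0 < ‖x‖ * ‖y‖)
  calc ‖x‖ * ‖y‖ * ‖NormedSpace.normalize x - NormedSpace.normalize y‖ ^ 2
      = (‖x‖ + ‖y‖ + ‖x + y‖) * (‖x‖ + ‖y‖ - ‖x + y‖) := by
        rw [norm_mul_norm_mul_sq_norm_normalize_sub_normalize, sq_sub_sq]
    _ ≤ 4 * (‖x‖ * ‖y‖) * (‖x‖ + ‖y‖ - ‖x + y‖) := by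
        gcongr
        nlinarith
    _ = ‖x‖ * ‖y‖ * (4 * (‖x‖ + ‖y‖ - ‖x + y‖)) := by ring

variable {H : Type*} [NormedAddCommGroup H]

/-- The embedding `y ↦ (1, y)` of `H` as an affine hyperplane of the Hilbert sum `ℝ ⊕ H`. Its norm
`√(1 + ‖y‖²)` is a strictly convex function of `y` of linear growth. -/
def affineLift (y : H) : WithLp 2 (ℝ × H) := WithLp.toLp 2 (1, y)

theorem continuous_affineLift : Continuous (affineLift : H → WithLp 2 (ℝ × H)) :=
  (WithLp.prod_continuous_toLp 2 ℝ H).comp (by fun_prop)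

theorem norm_affineLift_zero : ‖affineLift (0 : H)‖ = 1 := by
  simp [affineLift]

theorem one_le_norm_affineLift (y : H) : 1 ≤ ‖affineLift y‖ := by
  simpa [affineLift] using WithLp.norm_fst_le ℝ (affineLift y)

theorem affineLift_ne_zero (y : H) : affineLift y ≠ 0 :=
  norm_pos_iff.1 (zero_lt_one.trans_le (one_le_norm_affineLift y))

theorem norm_affineLift_le (y : H) : ‖affineLift y‖ ≤ 1 + ‖y‖ := by
  have hsplit : affineLift y = WithLp.toLp 2 (1, 0) + WithLp.toLp 2 (0, y) := by
    simp [affineLift, ← WithLp.toLp_add]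
  rw [hsplit]
  exact (norm_add_le _ _).trans (by simp)

section NormedSpace

variable [NormedSpace ℝ H]

theorem affineLift_add_affineLift (y z : H) :
    affineLift y + affineLift z = (2 : ℝ) • affineLift (midpoint ℝ y z) := by
  simp only [affineLift, ← WithLp.toLp_add, Prod.mk_add_mk, two_smul, midpoint_add_self]

/-- The unit normal direction `(1, y) / √(1 + ‖y‖²)`. -/
noncomputable def unitNormal (y : H) : WithLp 2 (ℝ × H) := NormedSpace.normalize (affineLift y)

theorem continuous_unitNormal : Continuous (unitNormal : H → WithLp 2 (ℝ × H)) :=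
  (continuous_affineLift.norm.inv₀ fun y => norm_ne_zero_iff.2 (affineLift_ne_zero y)).smul
    continuous_affineLift

theorem unitNormal_fst (y : H) : (unitNormal y).fst = ‖affineLift y‖⁻¹ := by
  simp [unitNormal, NormedSpace.normalize, affineLift]

theorem unitNormal_fst_inv_smul_snd (y : H) :
    (unitNormal y).fst⁻¹ • (unitNormal y).snd = y := by
  rw [unitNormal_fst, inv_inv, ← WithLp.smul_snd, unitNormal, norm_smul_normalize]
  rfl

theorem exists_tendsto_of_tendsto_unitNormal {y : ℕ → H} {V : WithLp 2 (ℝ × H)} {R : ℝ}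
    (hV : Tendsto (fun n => unitNormal (y n)) atTop (𝓝 V)) (hR : ∃ᶠ n in atTop, ‖y n‖ ≤ R) :
    ∃ z, Tendsto y atTop (𝓝 z) := by
  have hfst : Tendsto (fun n => (unitNormal (y n)).fst) atTop (𝓝 V.fst) :=
    ((WithLp.continuous_fst 2 ℝ H).tendsto V).comp hV
  have hsnd : Tendsto (fun n => (unitNormal (y n)).snd) atTop (𝓝 V.snd) :=
    ((WithLp.continuous_snd 2 ℝ H).tendsto V).comp hV
  obtain ⟨n, hn⟩ := hR.exists
  have hVpos : (1 + R)⁻¹ ≤ V.fst := ge_of_tendsto_of_frequently hfst <| hR.mono fun n hn => by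
    rw [unitNormal_fst]
    exact inv_anti₀ (zero_lt_one.trans_le (one_le_norm_affineLift _))
      ((norm_affineLift_le _).trans (by gcongr))
  have hRpos : 0 < (1 + R)⁻¹ := by
    have := (norm_nonneg _).trans hn
    positivity
  refine ⟨V.fst⁻¹ • V.snd, ((hfst.inv₀ (hRpos.trans_le hVpos).ne').smul hsnd).congr fun n => ?_⟩
  exact unitNormal_fst_inv_smul_snd (y n)

end NormedSpace

theorem sq_norm_unitNormal_sub_le [InnerProductSpace ℝ H] (y z : H) :
    ‖unitNormal y - unitNormal z‖ ^ 2 ≤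
      4 * (‖affineLift y‖ + ‖affineLift z‖ - 2 * ‖affineLift (midpoint ℝ y z)‖) := by
  have h := sq_norm_normalize_sub_normalize_le (one_le_norm_affineLift y)
    (one_le_norm_affineLift z)
  rwa [affineLift_add_affineLift, norm_smul, Real.norm_two] at h

theorem sq_norm_unitNormal_sub_unitNormal_zero_le [InnerProductSpace ℝ H] (y : H) :
    ‖unitNormal y - unitNormal 0‖ ^ 2 ≤ 4 * ‖y‖ := by
  have h := sq_norm_unitNormal_sub_le y 0
  rw [norm_affineLift_zero] at h
  linarith [norm_affineLift_le y, one_le_norm_affineLift (midpoint ℝ y 0)]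

end UnitNormal

variable {α : Type*} [MeasurableSpace α] {μ : Measure α}

section AreaExcess

variable {H : Type*} [NormedAddCommGroup H]

theorem integrable_norm_affineLift_sub_one {f : α → H} (hf : Integrable f μ) :
    Integrable (fun x => ‖affineLift (f x)‖ - 1) μ := by
  have hcont : Continuous fun y : H => ‖affineLift y‖ - 1 :=
    continuous_affineLift.norm.sub continuous_const
  refine hf.norm.mono' (hcont.comp_aestronglyMeasurable hf.1) (ae_of_all _ fun x => ?_)
  rw [Real.norm_of_nonneg (sub_nonneg.2 (one_le_norm_affineLift _))]
  exact sub_le_iff_le_add'.2 (norm_affineLift_le _)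

/-- The functional `∫ (√(1 + ‖f‖²) - 1) dμ`, which for `f = ∇v` is the area of the graph of `v`
in excess of the area of its domain. -/
noncomputable def areaExcess (f : Lp H 1 μ) : ℝ := ∫ x, (‖affineLift (f x)‖ - 1) ∂μ

theorem areaExcess_nonneg (f : Lp H 1 μ) : 0 ≤ areaExcess f :=
  integral_nonneg fun _ => sub_nonneg.2 (one_le_norm_affineLift _)

theorem areaExcess_le_norm (f : Lp H 1 μ) : areaExcess f ≤ ‖f‖ := by
  rw [L1.norm_eq_integral_norm]
  exact integral_mono (integrable_norm_affineLift_sub_one (L1.integrable_coeFn f))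
    (L1.integrable_coeFn f).norm fun x => sub_le_iff_le_add'.2 (norm_affineLift_le _)

theorem coeFn_midpoint [NormedSpace ℝ H] {p : ℝ≥0∞} (f g : Lp H p μ) :
    ⇑(midpoint ℝ f g) =ᵐ[μ] fun x => midpoint ℝ (f x) (g x) := by
  rw [midpoint_eq_smul_add]
  filter_upwards [Lp.coeFn_smul (⅟2 : ℝ) (f + g), Lp.coeFn_add f g] with x hsmul hadd
  rw [hsmul, Pi.smul_apply, hadd, Pi.add_apply, midpoint_eq_smul_add]

theorem eLpNorm_le_ofReal_of_norm_le {p : ℝ≥0∞} {f : Lp H p μ} {C : ℝ} (hf : ‖f‖ ≤ C) :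
    eLpNorm f p μ ≤ ENNReal.ofReal C :=
  (ENNReal.le_ofReal_iff_toReal_le (Lp.eLpNorm_ne_top f) (toReal_nonneg.trans hf)).2 hf

theorem ae_exists_frequently_norm_le {w : ℕ → Lp H 1 μ} {C : ℝ} (hw : ∀ n, ‖w n‖ ≤ C) :
    ∀ᵐ x ∂μ, ∃ R : ℝ, ∃ᶠ n in atTop, ‖w n x‖ ≤ R := by
  borelize H
  filter_upwards [ae_bdd_liminf_atTop_of_eLpNorm_bdd (R := C.toNNReal) one_ne_zero
    (fun n => (Lp.stronglyMeasurable (w n)).measurable)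
    fun n => eLpNorm_le_ofReal_of_norm_le (hw n)] with x hx
  obtain ⟨R, hliminf, hR⟩ := exists_between hx
  refine ⟨R.toReal, (frequently_lt_of_liminf_lt (by isBoundedDefault) hliminf).mono fun n hn => ?_⟩
  rw [← toReal_enorm]
  exact ENNReal.toReal_mono hR.ne hn.le

theorem exists_Lp_tendsto_ae {p : ℝ≥0∞} {w : ℕ → Lp H p μ} {C : ℝ}
    (hw : ∀ n, ‖w n‖ ≤ C) (hlim : ∀ᵐ x ∂μ, ∃ z, Tendsto (fun n => w n x) atTop (𝓝 z)) :
    ∃ g : Lp H p μ, ∀ᵐ x ∂μ, Tendsto (fun n => w n x) atTop (𝓝 (g x)) := by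
  have hmeas : ∀ n, AEStronglyMeasurable (w n) μ := fun n => Lp.aestronglyMeasurable (w n)
  obtain ⟨g, hg, hwg⟩ := exists_stronglyMeasurable_limit_of_tendsto_ae hmeas hlim
  have hgp : MemLp g p μ := ⟨hg.aestronglyMeasurable,
    (Lp.eLpNorm_le_of_ae_tendsto (Eventually.of_forall fun n => eLpNorm_le_ofReal_of_norm_le (hw n))
      hmeas hwg).trans_lt ENNReal.ofReal_lt_top⟩
  refine ⟨hgp.toLp g, ?_⟩
  filter_upwards [hwg, hgp.coeFn_toLp] with x hx hgx
  rwa [hgx]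

variable [InnerProductSpace ℝ H]

theorem memLp_two_unitNormal_sub {f : α → H} (hf : Integrable f μ) :
    MemLp (fun x => unitNormal (f x) - unitNormal 0) 2 μ := by
  have hmeas : AEStronglyMeasurable (fun x => unitNormal (f x) - unitNormal 0) μ :=
    (continuous_unitNormal.sub continuous_const).comp_aestronglyMeasurable hf.1
  refine (memLp_two_iff_integrable_sq_norm hmeas).2
    ((hf.norm.const_mul 4).mono' (hmeas.norm.pow 2) (ae_of_all _ fun x => ?_))
  rw [Real.norm_of_nonneg (sq_nonneg _)]
  exact sq_norm_unitNormal_sub_unitNormal_zero_le (f x)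

/-- The unit normal field of `f`, measured from the vertical direction so that it is square
integrable even when `μ` is infinite. -/
noncomputable def unitNormalLp (f : Lp H 1 μ) : Lp (WithLp 2 (ℝ × H)) 2 μ :=
  (memLp_two_unitNormal_sub (L1.integrable_coeFn f)).toLp

theorem coeFn_unitNormalLp (f : Lp H 1 μ) :
    unitNormalLp f =ᵐ[μ] fun x => unitNormal (f x) - unitNormal 0 :=
  MemLp.coeFn_toLp _

theorem sq_dist_unitNormalLp_le (f g : Lp H 1 μ) :
    dist (unitNormalLp f) (unitNormalLp g) ^ 2 ≤
      4 * (areaExcess f + areaExcess g - 2 * areaExcess (midpoint ℝ f g)) := by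
  have hint : ∀ h : Lp H 1 μ, Integrable (fun x => ‖affineLift (h x)‖ - 1) μ := fun h =>
    integrable_norm_affineLift_sub_one (L1.integrable_coeFn h)
  have hadd : Integrable (fun x => ‖affineLift (f x)‖ - 1 + (‖affineLift (g x)‖ - 1)) μ :=
    (hint f).add (hint g)
  have hmid := (hint (midpoint ℝ f g)).const_mul 2
  calc dist (unitNormalLp f) (unitNormalLp g) ^ 2
      = ∫ x, ‖(unitNormalLp f - unitNormalLp g) x‖ ^ 2 ∂μ := by
        rw [dist_eq_norm, ← real_inner_self_eq_norm_sq, L2.inner_def]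
        simp only [real_inner_self_eq_norm_sq]
    _ ≤ ∫ x, 4 * (‖affineLift (f x)‖ - 1 + (‖affineLift (g x)‖ - 1) -
          2 * (‖affineLift (midpoint ℝ f g x)‖ - 1)) ∂μ := by
        refine integral_mono_ae (Lp.memLp _).norm.integrable_sq
          ((hadd.sub hmid).const_mul 4) ?_
        filter_upwards [Lp.coeFn_sub (unitNormalLp f) (unitNormalLp g), coeFn_unitNormalLp f,
          coeFn_unitNormalLp g, coeFn_midpoint f g] with x hsub hf hg hfg
        rw [hsub, Pi.sub_apply, hf, hg, hfg, sub_sub_sub_cancel_right]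
        exact (sq_norm_unitNormal_sub_le _ _).trans_eq (by ring)
    _ = 4 * (areaExcess f + areaExcess g - 2 * areaExcess (midpoint ℝ f g)) := by
        rw [integral_const_mul, integral_sub hadd hmid, integral_add (hint f) (hint g),
          integral_const_mul, areaExcess, areaExcess, areaExcess]

/-- Bounded decreasing convex sets in `L¹` may have empty intersection, but minimizing the strictly
convex functional `areaExcess` over them forces convergence of the unit normals in `L²`. -/
theorem exists_selection_tendsto_ae [CompleteSpace H] {S : ℕ → Set (Lp H 1 μ)}
    (hanti : Antitone S) (hne : ∀ n, (S n).Nonempty) (hconv : ∀ n, Convex ℝ (S n))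
    (hbdd : IsBounded (S 0)) :
    ∃ (w : ℕ → Lp H 1 μ) (g : Lp H 1 μ), (∀ n, w n ∈ S n) ∧
      ∀ᵐ x ∂μ, Tendsto (fun n => w n x) atTop (𝓝 (g x)) := by
  obtain ⟨C, hC⟩ := hbdd.exists_norm_le
  have hΦ : IsBounded (areaExcess '' S 0) := (Metric.isBounded_Icc 0 C).subset <|
    Set.image_subset_iff.2 fun f hf => ⟨areaExcess_nonneg f, (areaExcess_le_norm f).trans (hC f hf)⟩
  obtain ⟨w, hwS, hcauchy⟩ := exists_cauchySeq_selection hanti hne hconv hΦ (V := unitNormalLp)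
    zero_le_four fun f _ g _ => sq_dist_unitNormalLp_le f g
  obtain ⟨V, hV⟩ := cauchySeq_tendsto_of_complete hcauchy
  obtain ⟨ns, hns, hnormal⟩ := (tendstoInMeasure_of_tendsto_Lp hV).exists_seq_tendsto_ae
  have hwC : ∀ n, ‖w (ns n)‖ ≤ C := fun n => hC _ (hanti (Nat.zero_le _) (hwS _))
  have hlim : ∀ᵐ x ∂μ, ∃ z, Tendsto (fun n => w (ns n) x) atTop (𝓝 z) := by
    filter_upwards [hnormal, ae_all_iff.2 fun n => coeFn_unitNormalLp (w n),
      ae_exists_frequently_norm_le hwC] with x hx hcoe ⟨R, hR⟩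
    refine exists_tendsto_of_tendsto_unitNormal (V := V x + unitNormal 0) ?_ hR
    simpa only [hcoe, sub_add_cancel] using hx.add_const (unitNormal 0)
  obtain ⟨g, hg⟩ := exists_Lp_tendsto_ae hwC hlim
  exact ⟨fun n => w (ns n), g, fun n => hanti (hns.id_le n) (hwS _), hg⟩

end AreaExcess

theorem isClosed_image_fst_of_forall_tendsto_ae {X H : Type*} [SeminormedAddCommGroup X]
    [NormedSpace ℝ X] [NormedAddCommGroup H] [InnerProductSpace ℝ H] [CompleteSpace H]
    {G : Set (X × Lp H 1 μ)} (hconv : Convex ℝ G) (hbdd : IsBounded (Prod.snd '' G))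
    (hG : ∀ (z : ℕ → X × Lp H 1 μ) (u : X) (g : Lp H 1 μ), (∀ n, z n ∈ G) →
      Tendsto (fun n => (z n).1) atTop (𝓝 u) →
      (∀ᵐ x ∂μ, Tendsto (fun n => (z n).2 x) atTop (𝓝 (g x))) → (u, g) ∈ G) :
    IsClosed (Prod.fst '' G) := by
  refine isClosed_of_closure_subset fun u hu => ?_
  set S : ℕ → Set (Lp H 1 μ) := fun n =>
    Prod.snd '' (G ∩ Prod.fst ⁻¹' Metric.ball u (1 / ((n : ℝ) + 1)))
  have hanti : Antitone S := fun m n hmn =>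
    Set.image_mono (Set.inter_subset_inter_right G
      (Set.preimage_mono (Metric.ball_subset_ball (Nat.one_div_le_one_div hmn))))
  have hne : ∀ n, (S n).Nonempty := fun n => by
    obtain ⟨_, ⟨z, hz, rfl⟩, hdist⟩ :=
      Metric.mem_closure_iff.1 hu _ (Nat.one_div_pos_of_nat (n := n))
    exact ⟨z.2, z, ⟨hz, Metric.mem_ball'.2 hdist⟩, rfl⟩
  have hS : ∀ n, Convex ℝ (S n) := fun n =>
    (hconv.inter ((convex_ball u _).linear_preimage (LinearMap.fst ℝ X _))).linear_image
      (LinearMap.snd ℝ X (Lp H 1 μ))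
  obtain ⟨w, g, hwS, hwg⟩ := exists_selection_tendsto_ae hanti hne hS
    (hbdd.subset (Set.image_mono Set.inter_subset_left))
  choose z hz hzw using hwS
  refine ⟨(u, g), hG z u g (fun n => (hz n).1) ?_ (by simpa only [hzw] using hwg), rfl⟩
  exact tendsto_iff_dist_tendsto_zero.2 (squeeze_zero (fun _ => dist_nonneg)
    (fun n => (Metric.mem_ball.1 (hz n).2).le) tendsto_one_div_add_atTop_nhds_zero_nat)

section WeakConvergence

variable {F : Type*} [NormedAddCommGroup F] [NormedSpace ℝ F]

theorem eLpNorm_indicator_smul_le {p q r : ℝ≥0∞} [p.HolderTriple q r] {w : α → ℝ} {φ : α → F}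
    (hw : AEStronglyMeasurable w μ) (hφ : AEStronglyMeasurable φ μ) {s : Set α}
    (hs : MeasurableSet s) :
    eLpNorm (s.indicator fun x => w x • φ x) r μ ≤
      eLpNorm w p μ * eLpNorm (s.indicator φ) q μ := by
  rw [Set.indicator_smul]
  exact eLpNorm_smul_le_mul_eLpNorm (hφ.indicator hs) hw

theorem unifIntegrable_smul {ι : Type*} {p q r : ℝ≥0∞} [p.HolderTriple q r] (hq_one : 1 ≤ q)
    (hq : q ≠ ∞) {w : ι → α → ℝ} {φ : α → F} {C : ℝ≥0∞} (hC : C ≠ ∞)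
    (hw : ∀ i, AEStronglyMeasurable (w i) μ) (hwC : ∀ i, eLpNorm (w i) p μ ≤ C)
    (hφ : MemLp φ q μ) : UnifIntegrable (fun i x => w i x • φ x) r μ := by
  intro ε hε
  obtain ⟨η, hη, hηε⟩ := ENNReal.exists_nnreal_pos_mul_lt hC (ENNReal.ofReal_pos.2 hε).ne'
  obtain ⟨δ, hδ, hsmall⟩ := hφ.eLpNorm_indicator_le hq_one hq (NNReal.coe_pos.2 hη)
  refine ⟨δ, hδ, fun i s hs hμs => ?_⟩
  calc eLpNorm (s.indicator fun x => w i x • φ x) r μ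
      ≤ eLpNorm (w i) p μ * eLpNorm (s.indicator φ) q μ :=
        eLpNorm_indicator_smul_le (hw i) hφ.1 hs
    _ ≤ C * η := mul_le_mul' (hwC i) (ENNReal.ofReal_coe_nnreal ▸ hsmall s hs hμs)
    _ ≤ ENNReal.ofReal ε := (mul_comm C _).trans_le hηε.le

theorem unifTight_smul {ι : Type*} {p q r : ℝ≥0∞} [p.HolderTriple q r] (hq : q ≠ ∞)
    {w : ι → α → ℝ} {φ : α → F} {C : ℝ≥0∞} (hC : C ≠ ∞) (hw : ∀ i, AEStronglyMeasurable (w i) μ)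
    (hwC : ∀ i, eLpNorm (w i) p μ ≤ C) (hφ : MemLp φ q μ) :
    UnifTight (fun i x => w i x • φ x) r μ := by
  intro ε hε
  obtain ⟨η, hη, hηε⟩ := ENNReal.exists_nnreal_pos_mul_lt hC (ENNReal.coe_pos.2 hε).ne'
  obtain ⟨s, hs, hμs, hsmall⟩ :=
    hφ.exists_eLpNorm_indicator_compl_lt hq (ENNReal.coe_pos.2 hη).ne'
  refine ⟨s, hμs.ne, fun i => ?_⟩
  calc eLpNorm (sᶜ.indicator fun x => w i x • φ x) r μ
      ≤ eLpNorm (w i) p μ * eLpNorm (sᶜ.indicator φ) q μ :=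
        eLpNorm_indicator_smul_le (hw i) hφ.1 hs.compl
    _ ≤ C * η := mul_le_mul' (hwC i) hsmall.le
    _ ≤ ε := (mul_comm C _).trans_le hηε.le

theorem tendsto_integral_smul_of_tendsto_ae {p q : ℝ≥0∞} [p.HolderConjugate q] (hq : q ≠ ∞)
    {w : ℕ → α → ℝ} {g : α → ℝ} {φ : α → F} {C : ℝ≥0∞} (hC : C ≠ ∞)
    (hw : ∀ n, AEStronglyMeasurable (w n) μ) (hwC : ∀ n, eLpNorm (w n) p μ ≤ C)
    (hwg : ∀ᵐ x ∂μ, Tendsto (fun n => w n x) atTop (𝓝 (g x))) (hφ : MemLp φ q μ) :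
    Tendsto (fun n => ∫ x, w n x • φ x ∂μ) atTop (𝓝 (∫ x, g x • φ x ∂μ)) := by
  have hg : MemLp g p μ := ⟨aestronglyMeasurable_of_tendsto_ae atTop hw hwg,
    (Lp.eLpNorm_le_of_ae_tendsto (Eventually.of_forall hwC) hw hwg).trans_lt hC.lt_top⟩
  have hwφ : ∀ n, Integrable (fun x => w n x • φ x) μ := fun n =>
    memLp_one_iff_integrable.1 (hφ.smul ⟨hw n, (hwC n).trans_lt hC.lt_top⟩)
  have hgφ : MemLp (fun x => g x • φ x) 1 μ := hφ.smul hg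
  have hunif := unifIntegrable_smul (r := 1) (HolderConjugate.one_le q p) hq hC hw hwC hφ
  have htight := unifTight_smul (r := 1) hq hC hw hwC hφ
  refine tendsto_integral_of_L1' _ hgφ.1 (Eventually.of_forall hwφ)
    (tendsto_Lp_of_tendsto_ae le_rfl one_ne_top (fun n => (hwφ n).1) hgφ hunif htight ?_)
  filter_upwards [hwg] with x hx
  exact hx.smul_const (φ x)

end WeakConvergence

section LinearConstraints

variable {ι X F : Type*} [NormedAddCommGroup F] [NormedSpace ℝ F] [SeminormedAddCommGroup X]
  [NormedSpace ℝ X]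

/-- The pairs `(u, ω)` with `‖ω‖_{L¹} ≤ K` and `‖ω‖_{L^p} ≤ K` solving the linear equations
`∫ ω φ i = ℓ i u`. Weak formulations of linear differential equations relating `ω` to `u` have
this form, with the `φ i` as test functions. -/
def constraintGraph (μ : Measure α) (p K : ℝ≥0∞) (φ : ι → α → F) (ℓ : ι → X →L[ℝ] F) :
    Set (X × Lp ℝ 1 μ) :=
  {z | eLpNorm z.2 1 μ ≤ K ∧ eLpNorm z.2 p μ ≤ K ∧ ∀ i, ∫ x, z.2 x • φ i x ∂μ = ℓ i z.1}

theorem mem_image_fst_constraintGraph {p K : ℝ≥0∞} (hK : K ≠ ∞) {φ : ι → α → F}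
    {ℓ : ι → X →L[ℝ] F} {u : X} :
    u ∈ Prod.fst '' constraintGraph μ p K φ ℓ ↔
      ∃ ω : α → ℝ, Integrable ω μ ∧ MemLp ω p μ ∧ eLpNorm ω 1 μ ≤ K ∧ eLpNorm ω p μ ≤ K ∧
        ∀ i, ∫ x, ω x • φ i x ∂μ = ℓ i u := by
  constructor
  · rintro ⟨⟨u, ω⟩, ⟨h1, hp, heq⟩, rfl⟩
    have hωp : MemLp ω p μ := ⟨Lp.aestronglyMeasurable ω, hp.trans_lt hK.lt_top⟩
    exact ⟨ω, L1.integrable_coeFn ω, hωp, h1, hp, heq⟩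
  · rintro ⟨ω, hω, -, h1, hp, heq⟩
    have hcoe : ⇑(hω.toL1 ω) =ᵐ[μ] ω := hω.coeFn_toL1
    refine ⟨(u, hω.toL1 ω), ⟨?_, ?_, fun i => ?_⟩, rfl⟩
    · rwa [eLpNorm_congr_ae hcoe]
    · rwa [eLpNorm_congr_ae hcoe]
    · rw [← heq i]
      exact integral_congr_ae (hcoe.mono fun x hx => congrArg (· • φ i x) hx)

theorem convex_setOf_eLpNorm_le {p q K : ℝ≥0∞} (hp : 1 ≤ p) :
    Convex ℝ {f : Lp F q μ | eLpNorm f p μ ≤ K} := by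
  intro f hf g hg a b ha hb hab
  have hmeas : ∀ h : Lp F q μ, AEStronglyMeasurable h μ := Lp.aestronglyMeasurable
  have hcoe : ⇑(a • f + b • g) =ᵐ[μ] a • ⇑f + b • ⇑g :=
    (Lp.coeFn_add _ _).trans ((Lp.coeFn_smul a f).add (Lp.coeFn_smul b g))
  calc eLpNorm (a • f + b • g : Lp F q μ) p μ
      = eLpNorm (a • ⇑f + b • ⇑g) p μ := eLpNorm_congr_ae hcoe
    _ ≤ eLpNorm (a • ⇑f) p μ + eLpNorm (b • ⇑g) p μ :=
        eLpNorm_add_le ((hmeas f).const_smul a) ((hmeas g).const_smul b) hp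
    _ ≤ ‖a‖ₑ * K + ‖b‖ₑ * K := by
        rw [eLpNorm_const_smul, eLpNorm_const_smul]
        gcongr
        exacts [hf, hg]
    _ = K := by
        rw [← add_mul, Real.enorm_of_nonneg ha, Real.enorm_of_nonneg hb,
          ← ENNReal.ofReal_add ha hb, hab, ENNReal.ofReal_one, one_mul]

variable {p q K : ℝ≥0∞} [p.HolderConjugate q] {φ : ι → α → F} {ℓ : ι → X →L[ℝ] F}

theorem convex_constraintGraph (hK : K ≠ ∞) (hφ : ∀ i, MemLp (φ i) q μ) :
    Convex ℝ (constraintGraph μ p K φ ℓ) := by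
  rintro ⟨u, ω⟩ ⟨hω1, hωp, hω⟩ ⟨v, ξ⟩ ⟨hξ1, hξp, hξ⟩ a b ha hb hab
  refine ⟨convex_setOf_eLpNorm_le le_rfl hω1 hξ1 ha hb hab,
    convex_setOf_eLpNorm_le (HolderConjugate.one_le p q) hωp hξp ha hb hab, fun i => ?_⟩
  have hint : ∀ f : Lp ℝ 1 μ, eLpNorm f p μ ≤ K → Integrable (fun x => f x • φ i x) μ :=
    fun f hf => memLp_one_iff_integrable.1
      ((hφ i).smul ⟨Lp.aestronglyMeasurable f, hf.trans_lt hK.lt_top⟩)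
  calc ∫ x, (a • ω + b • ξ) x • φ i x ∂μ
      = ∫ x, (a • ω x • φ i x + b • ξ x • φ i x) ∂μ := by
        refine integral_congr_ae ?_
        filter_upwards [Lp.coeFn_add (a • ω) (b • ξ), Lp.coeFn_smul a ω, Lp.coeFn_smul b ξ]
          with x hadd ha hb
        simp only [hadd, Pi.add_apply, ha, hb, Pi.smul_apply, add_smul, smul_assoc]
    _ = a • ℓ i u + b • ℓ i v := by
        rw [integral_add ((hint ω hωp).fun_smul a) ((hint ξ hξp).fun_smul b), integral_smul,
          integral_smul, hω, hξ]
    _ = ℓ i (a • u + b • v) := by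
        rw [map_add, map_smul, map_smul]

theorem isBounded_image_snd_constraintGraph (hK : K ≠ ∞) :
    IsBounded (Prod.snd '' constraintGraph μ p K φ ℓ) := by
  refine isBounded_iff_forall_norm_le.2 ⟨K.toReal, ?_⟩
  rintro _ ⟨z, hz, rfl⟩
  exact ENNReal.toReal_mono hK hz.1

theorem mem_constraintGraph_of_tendsto_ae (hK : K ≠ ∞) (hq : q ≠ ∞)
    (hφ : ∀ i, MemLp (φ i) q μ) {z : ℕ → X × Lp ℝ 1 μ} {u : X} {g : Lp ℝ 1 μ}
    (hz : ∀ n, z n ∈ constraintGraph μ p K φ ℓ) (hu : Tendsto (fun n => (z n).1) atTop (𝓝 u))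
    (hg : ∀ᵐ x ∂μ, Tendsto (fun n => (z n).2 x) atTop (𝓝 (g x))) :
    (u, g) ∈ constraintGraph μ p K φ ℓ := by
  have hmeas : ∀ n, AEStronglyMeasurable (z n).2 μ := fun n => Lp.aestronglyMeasurable _
  refine ⟨Lp.eLpNorm_le_of_ae_tendsto (.of_forall fun n => (hz n).1) hmeas hg,
    Lp.eLpNorm_le_of_ae_tendsto (.of_forall fun n => (hz n).2.1) hmeas hg, fun i => ?_⟩
  refine tendsto_nhds_unique
    (tendsto_integral_smul_of_tendsto_ae hq hK hmeas (fun n => (hz n).2.1) hg (hφ i)) ?_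
  exact (((ℓ i).continuous.tendsto u).comp hu).congr fun n => ((hz n).2.2 i).symm

theorem isClosed_setOf_exists_eLpNorm_le_integral_eq (hK : K ≠ ∞) (hq : q ≠ ∞)
    (hφ : ∀ i, MemLp (φ i) q μ) :
    IsClosed {u : X | ∃ ω : α → ℝ, Integrable ω μ ∧ MemLp ω p μ ∧ eLpNorm ω 1 μ ≤ K ∧
      eLpNorm ω p μ ≤ K ∧ ∀ i, ∫ x, ω x • φ i x ∂μ = ℓ i u} := by
  simp only [← mem_image_fst_constraintGraph hK]
  exact isClosed_image_fst_of_forall_tendsto_ae (convex_constraintGraph hK hφ)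
    (isBounded_image_snd_constraintGraph hK) fun _ _ _ => mem_constraintGraph_of_tendsto_ae hK hq hφ

theorem measurableSet_setOf_exists_memLp_integral_eq (hq : q ≠ ∞) (hφ : ∀ i, MemLp (φ i) q μ) :
    MeasurableSet[borel X] {u : X | ∃ ω : α → ℝ, Integrable ω μ ∧ MemLp ω p μ ∧
      ∀ i, ∫ x, ω x • φ i x ∂μ = ℓ i u} := by
  borelize X
  have hunion : {u : X | ∃ ω : α → ℝ, Integrable ω μ ∧ MemLp ω p μ ∧
      ∀ i, ∫ x, ω x • φ i x ∂μ = ℓ i u} =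
      ⋃ n : ℕ, {u : X | ∃ ω : α → ℝ, Integrable ω μ ∧ MemLp ω p μ ∧ eLpNorm ω 1 μ ≤ n ∧
        eLpNorm ω p μ ≤ n ∧ ∀ i, ∫ x, ω x • φ i x ∂μ = ℓ i u} := by
    ext u
    simp only [Set.mem_iUnion, Set.mem_ofPred_eq]
    constructor
    · rintro ⟨ω, hω1, hωp, heq⟩
      obtain ⟨n, hn⟩ := ENNReal.exists_nat_gt
        (max_lt (memLp_one_iff_integrable.2 hω1).eLpNorm_lt_top hωp.eLpNorm_lt_top).ne
      exact ⟨n, ω, hω1, hωp, (le_max_left _ _).trans hn.le, (le_max_right _ _).trans hn.le, heq⟩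
    · rintro ⟨-, ω, hω1, hωp, -, -, heq⟩
      exact ⟨ω, hω1, hωp, heq⟩
  rw [hunion]
  exact .iUnion fun n =>
    (isClosed_setOf_exists_eLpNorm_le_integral_eq (natCast_ne_top n) hq hφ).measurableSet

end LinearConstraints

/-- The rotated gradient `(∂₂φ, -∂₁φ)`; the `L²` pairing of a vector field `u` with it is the
distribution `curl u` tested against `φ`. -/
noncomputable def rotGrad (φ : E → ℝ) (x : E) : E :=
  !₂[fderiv ℝ φ x (EuclideanSpace.single 1 1), -fderiv ℝ φ x (EuclideanSpace.single 0 1)]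

theorem memLp_rotGrad (φ : 𝓓((⊤ : Opens E), ℝ)) (p : ℝ≥0∞) :
    MemLp (rotGrad φ) p (volume : Measure E) := by
  have hfderiv : Continuous (fderiv ℝ φ) := φ.contDiff.continuous_fderiv (by simp)
  have hcont : Continuous (rotGrad φ) := by
    unfold rotGrad
    fun_prop
  refine hcont.memLp_of_hasCompactSupport ((φ.hasCompactSupport.fderiv ℝ).mono fun x => ?_)
  simp only [Function.mem_support]
  exact mt fun hx => by simp [rotGrad, hx]

theorem innerSL_rotGrad_apply (φ : 𝓓((⊤ : Opens E), ℝ)) (u : Lp E 2 (volume : Measure E)) :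
    innerSL ℝ (memLp_rotGrad φ 2).toLp u =
      ∫ x, (u x 0 * fderiv ℝ φ x (EuclideanSpace.single 1 1) -
        u x 1 * fderiv ℝ φ x (EuclideanSpace.single 0 1)) := by
  rw [innerSL_apply_apply, L2.inner_def]
  refine integral_congr_ae ((memLp_rotGrad φ 2).coeFn_toLp.mono fun x hx => ?_)
  simp [hx, PiLp.inner_apply, rotGrad, sub_eq_add_neg]

theorem isDistributionalVorticity_iff {u : Lp E 2 (volume : Measure E)} {ω : E → ℝ} :
    IsDistributionalVorticity u ω ↔
      ∀ φ : 𝓓((⊤ : Opens E), ℝ), ∫ x, ω x • φ x = innerSL ℝ (memLp_rotGrad φ 2).toLp u := by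
  simp only [innerSL_rotGrad_apply, smul_eq_mul]
  exact ⟨fun h φ => h φ φ.contDiff φ.hasCompactSupport,
    fun h φ hφ hsupp => h ⟨φ, hφ, hsupp, Set.subset_univ _⟩⟩

/-- For `1 < p ≤ ∞` and `k > 0`, the set of square-integrable vector fields on
`ℝ²` whose distributional vorticity is represented by some
`ω ∈ L¹(ℝ²) ∩ L^p(ℝ²)` with both norms bounded by `k` is closed in `L²`;
consequently the set of vector fields with vorticity in `L¹ ∩ L^p` is Borel. -/
theorem vorticity_class_Lp_closed_and_borel (p : ℝ≥0∞) (hp : 1 < p) (k : ℝ) (hk : 0 < k) :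
    IsClosed {u : Lp E 2 (volume : Measure E) |
      ∃ ω : E → ℝ, Integrable ω (volume : Measure E) ∧ MemLp ω p (volume : Measure E) ∧
        eLpNorm ω 1 (volume : Measure E) ≤ ENNReal.ofReal k ∧
        eLpNorm ω p (volume : Measure E) ≤ ENNReal.ofReal k ∧
        IsDistributionalVorticity u ω} ∧
    MeasurableSet[borel (Lp E 2 (volume : Measure E))]
      {u : Lp E 2 (volume : Measure E) |
        ∃ ω : E → ℝ, Integrable ω (volume : Measure E) ∧
          MemLp ω p (volume : Measure E) ∧ IsDistributionalVorticity u ω} := by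
  have : p.HolderConjugate (conjExponent p) := .conjExponent hp.le
  have hq : conjExponent p ≠ ∞ := (HolderConjugate.ne_top_iff_ne_one _ p).2 hp.ne'
  have hφ (φ : 𝓓((⊤ : Opens E), ℝ)) : MemLp φ (conjExponent p) (volume : Measure E) :=
    φ.continuous.memLp_of_hasCompactSupport φ.hasCompactSupport
  simp only [isDistributionalVorticity_iff]
  exact ⟨isClosed_setOf_exists_eLpNorm_le_integral_eq ofReal_ne_top hq hφ,
    measurableSet_setOf_exists_memLp_integral_eq hq hφ⟩
end

section
/- Fix p with 1 ≤ p ≤ ∞. Define Φ_p : L²(ℝ²;ℝ²) → [0,∞] by setting Φ_p(u) equal to the L^p(ℝ²)-norm of ω whenever there exists ω ∈ L¹(ℝ²) ∩ L^∞(ℝ²) representing the distributional vorticity of u, and Φ_p(u) = ∞ otherwise. Then Φ_p is Borel measurable with respect to the norm topology on L²(ℝ²;ℝ²). -/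
/-!
Since `L¹ ∩ L^∞ ⊆ L²`, the vorticities which count are elements of `L²(ℝ²)`. Testing against a
fixed smooth function is continuous on `L²`, so the graph of the distributional curl is closed in
`L²(ℝ²;ℝ²) × L²(ℝ²)`, and the part of it over `L¹ ∩ L^∞` is Borel because `L^q` norms are lower
semicontinuous on `L²`. The curl being single-valued, the projection of the graph to
`L²(ℝ²;ℝ²)` is injective. By the Lusin–Souslin theorem it maps Borel sets to Borel sets, in
particular the Borel parts of the graph which project onto the sets `{Φ_p < c}`.
-/

open MeasureTheory ENNReal
open scoped Classical

local notation "E" => EuclideanSpace ℝ (Fin 2)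

/-- `Φ_p u`: the `L^p` norm of the vorticity of `u`, whenever the vorticity of
`u` is represented by a function `ω ∈ L¹(ℝ²) ∩ L^∞(ℝ²)`, and `∞` otherwise.
The representative is unique up to null sets, so the value does not depend on
the choice. -/
noncomputable def vorticityLpNorm (p : ℝ≥0∞) (u : Lp E 2 (volume : Measure E)) : ℝ≥0∞ :=
  if h : ∃ ω : E → ℝ, Integrable ω (volume : Measure E) ∧
      MemLp ω ∞ (volume : Measure E) ∧ IsDistributionalVorticity u ω
  then eLpNorm h.choose p (volume : Measure E)
  else ⊤

section GraphInfimum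

variable {X Y α : Type*} [MeasurableSpace X] [StandardBorelSpace X] [MeasurableSpace Y]
  [StandardBorelSpace Y] [CompleteLinearOrder α] [TopologicalSpace α] [OrderTopology α]
  [SecondCountableTopology α] [MeasurableSpace α] [BorelSpace α]

theorem measurable_iInf_of_injOn_fst {s : Set (X × Y)} (hs : MeasurableSet s)
    (hinj : s.InjOn Prod.fst) {f : X × Y → α} (hf : Measurable f) :
    Measurable fun x => ⨅ (y) (_ : (x, y) ∈ s), f (x, y) := by
  refine measurable_of_Iio fun c => ?_
  have hpreimage : (fun x => ⨅ (y) (_ : (x, y) ∈ s), f (x, y)) ⁻¹' Set.Iio c =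
      Prod.fst '' (s ∩ f ⁻¹' Set.Iio c) := by
    ext x
    simp [iInf_lt_iff]
  rw [hpreimage]
  exact (hs.inter (hf measurableSet_Iio)).image_of_measurable_injOn measurable_fst
    (hinj.mono Set.inter_subset_left)

end GraphInfimum

section LpSpaces

variable {α F : Type*} [MeasurableSpace α] {μ : Measure α}

theorem memLp_of_memLp_of_memLp_top [NormedAddCommGroup F] {f : α → F} {p q : ℝ≥0∞}
    (hp : p ≠ 0) (hpq : p ≤ q) (hfp : MemLp f p μ) (hf : MemLp f ∞ μ) : MemLp f q μ := by
  obtain rfl | hq := eq_or_ne q ∞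
  · exact hf
  have hp_top : p ≠ ∞ := ne_top_of_le_ne_top hq hpq
  have hq_zero : q ≠ 0 := (hp.bot_lt.trans_le hpq).ne'
  have hle : p.toReal ≤ q.toReal := toReal_mono hq hpq
  have hbound : ∀ᵐ x ∂μ, ‖f x‖ₑ ^ q.toReal ≤
      eLpNorm f ∞ μ ^ (q.toReal - p.toReal) * ‖f x‖ₑ ^ p.toReal := by
    filter_upwards [ae_le_eLpNormEssSup (f := f)] with x hx
    calc ‖f x‖ₑ ^ q.toReal = ‖f x‖ₑ ^ (q.toReal - p.toReal) * ‖f x‖ₑ ^ p.toReal := by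
          rw [← rpow_add_of_nonneg _ _ (sub_nonneg.2 hle) toReal_nonneg, sub_add_cancel]
      _ ≤ eLpNorm f ∞ μ ^ (q.toReal - p.toReal) * ‖f x‖ₑ ^ p.toReal := by
          gcongr
          rwa [eLpNorm_exponent_top]
  have hfactor : eLpNorm f ∞ μ ^ (q.toReal - p.toReal) < ∞ :=
    rpow_lt_top_of_nonneg (sub_nonneg.2 hle) hf.2.ne
  refine ⟨hf.1, (eLpNorm_lt_top_iff_lintegral_rpow_enorm_lt_top hq_zero hq).2 ?_⟩
  calc ∫⁻ x, ‖f x‖ₑ ^ q.toReal ∂μ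
      ≤ ∫⁻ x, eLpNorm f ∞ μ ^ (q.toReal - p.toReal) * ‖f x‖ₑ ^ p.toReal ∂μ :=
        lintegral_mono_ae hbound
    _ = eLpNorm f ∞ μ ^ (q.toReal - p.toReal) * ∫⁻ x, ‖f x‖ₑ ^ p.toReal ∂μ :=
        lintegral_const_mul' _ _ hfactor.ne
    _ < ∞ := mul_lt_top hfactor
        ((eLpNorm_lt_top_iff_lintegral_rpow_enorm_lt_top hp hp_top).1 hfp.2)

section LowerSemicontinuity

variable [NormedAddCommGroup F] {q : ℝ≥0∞} [Fact (1 ≤ q)]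

theorem lowerSemicontinuous_eLpNorm_coeFn (p : ℝ≥0∞) :
    LowerSemicontinuous fun f : Lp F q μ => eLpNorm f p μ := by
  rw [lowerSemicontinuous_iff_isClosed_preimage]
  intro c
  refine IsSeqClosed.isClosed fun f g hf hfg => ?_
  obtain ⟨ns, -, hns⟩ := (tendstoInMeasure_of_tendsto_Lp hfg).exists_seq_tendsto_ae
  exact Lp.eLpNorm_le_of_ae_tendsto (.of_forall fun n => hf (ns n))
    (fun n => Lp.aestronglyMeasurable _) hns

variable [MeasurableSpace (Lp F q μ)] [OpensMeasurableSpace (Lp F q μ)]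

theorem measurable_eLpNorm_coeFn (p : ℝ≥0∞) :
    Measurable fun f : Lp F q μ => eLpNorm f p μ :=
  (lowerSemicontinuous_eLpNorm_coeFn p).measurable

theorem measurableSet_setOf_memLp_coeFn (p : ℝ≥0∞) :
    MeasurableSet {f : Lp F q μ | MemLp f p μ} := by
  simp only [MemLp, Lp.aestronglyMeasurable, true_and]
  exact measurableSet_lt (measurable_eLpNorm_coeFn p) measurable_const

end LowerSemicontinuity

theorem continuous_integral_inner_of_memLp {𝕜 : Type*} [RCLike 𝕜] [NormedAddCommGroup F]
    [InnerProductSpace 𝕜 F] {g : α → F} (hg : MemLp g 2 μ) :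
    Continuous fun f : Lp F 2 μ => ∫ x, inner 𝕜 (f x) (g x) ∂μ := by
  have hinner (f : Lp F 2 μ) :
      ∫ x, inner 𝕜 (f x) (g x) ∂μ = inner 𝕜 f (hg.toLp g) := by
    rw [L2.inner_def]
    refine integral_congr_ae ?_
    filter_upwards [hg.coeFn_toLp] with x hx
    rw [hx]
  simp only [hinner]
  fun_prop

end LpSpaces

section PerpGradient

/-- The rotated gradient `(∂₂φ, -∂₁φ)`, the formal adjoint of the curl: pairing `u` with it
defines the distributional vorticity of `u`. The indices `0`, `1` stand for the coordinates
`1`, `2`. -/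
noncomputable def perpGradient (φ : E → ℝ) (x : E) : E :=
  !₂[fderiv ℝ φ x (EuclideanSpace.single 1 1), -fderiv ℝ φ x (EuclideanSpace.single 0 1)]

variable {φ : E → ℝ}

theorem continuous_perpGradient (hφ : ContDiff ℝ 1 φ) : Continuous (perpGradient φ) := by
  have hφ' : Continuous (fderiv ℝ φ) := hφ.continuous_fderiv one_ne_zero
  refine (PiLp.continuous_toLp 2 _).comp (continuous_pi fun i => ?_)
  fin_cases i
  · exact hφ'.clm_apply continuous_const
  · exact (hφ'.clm_apply continuous_const).neg

theorem hasCompactSupport_perpGradient (hφ : HasCompactSupport φ) :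
    HasCompactSupport (perpGradient φ) := by
  refine (hφ.fderiv ℝ).mono fun x hx hzero => hx ?_
  ext i
  fin_cases i <;> simp [perpGradient, hzero]

theorem memLp_perpGradient (hφ : ContDiff ℝ 1 φ) (hφc : HasCompactSupport φ) (q : ℝ≥0∞)
    (μ : Measure E) [IsFiniteMeasureOnCompacts μ] : MemLp (perpGradient φ) q μ :=
  (continuous_perpGradient hφ).memLp_of_hasCompactSupport (hasCompactSupport_perpGradient hφc)

theorem inner_perpGradient (v x : E) :
    inner ℝ v (perpGradient φ x) = v 0 * fderiv ℝ φ x (EuclideanSpace.single 1 1) -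
      v 1 * fderiv ℝ φ x (EuclideanSpace.single 0 1) := by
  simp [perpGradient, PiLp.inner_apply, Fin.sum_univ_two, mul_comm, sub_eq_add_neg]

end PerpGradient

section DistributionalVorticity

theorem isDistributionalVorticity_iff_integral_inner {u : Lp E 2 (volume : Measure E)}
    {ω : E → ℝ} : IsDistributionalVorticity u ω ↔
      ∀ φ : E → ℝ, ContDiff ℝ (⊤ : ℕ∞) φ → HasCompactSupport φ →
        ∫ x, inner ℝ (ω x) (φ x) = ∫ x, inner ℝ (u x) (perpGradient φ x) := by
  simp only [IsDistributionalVorticity, inner_perpGradient, Real.inner_apply]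

theorem isClosed_setOf_isDistributionalVorticity :
    IsClosed {z : Lp E 2 (volume : Measure E) × Lp ℝ 2 (volume : Measure E) |
      IsDistributionalVorticity z.1 z.2} := by
  simp only [isDistributionalVorticity_iff_integral_inner, Set.ofPred_forall]
  refine isClosed_iInter fun φ => isClosed_iInter fun hφ => isClosed_iInter fun hφc => ?_
  have hφ₂ : MemLp φ 2 volume := hφ.continuous.memLp_of_hasCompactSupport hφc
  have hgrad₂ : MemLp (perpGradient φ) 2 volume :=
    memLp_perpGradient (hφ.of_le (by simp)) hφc 2 volume
  exact isClosed_eq ((continuous_integral_inner_of_memLp hφ₂).comp continuous_snd)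
    ((continuous_integral_inner_of_memLp hgrad₂).comp continuous_fst)

variable {u : Lp E 2 (volume : Measure E)} {ω ω' : E → ℝ}

theorem IsDistributionalVorticity.congr_ae (h : IsDistributionalVorticity u ω)
    (hω : ω =ᵐ[volume] ω') : IsDistributionalVorticity u ω' := by
  intro φ hφ hφc
  rw [← h φ hφ hφc]
  refine integral_congr_ae ?_
  filter_upwards [hω] with x hx
  rw [hx]

theorem IsDistributionalVorticity.ae_eq (h : IsDistributionalVorticity u ω)
    (h' : IsDistributionalVorticity u ω') (hω : LocallyIntegrable ω)
    (hω' : LocallyIntegrable ω') : ω =ᵐ[volume] ω' := by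
  refine ae_eq_of_integral_contDiff_smul_eq hω hω' fun φ hφ hφc => ?_
  simp only [smul_eq_mul, mul_comm (φ _)]
  rw [h φ hφ hφc, h' φ hφ hφc]

theorem IsDistributionalVorticity.vorticityLpNorm_eq (h : IsDistributionalVorticity u ω)
    (hω₁ : Integrable ω) (hω : MemLp ω ∞) (p : ℝ≥0∞) :
    vorticityLpNorm p u = eLpNorm ω p volume := by
  have hex : ∃ ω : E → ℝ, Integrable ω (volume : Measure E) ∧
      MemLp ω ∞ (volume : Measure E) ∧ IsDistributionalVorticity u ω := ⟨ω, hω₁, hω, h⟩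
  obtain ⟨hchoose₁, -, hchoose⟩ := hex.choose_spec
  rw [vorticityLpNorm, dif_pos hex]
  exact eLpNorm_congr_ae (hchoose.ae_eq h hchoose₁.locallyIntegrable hω₁.locallyIntegrable)

end DistributionalVorticity

section VorticityGraph

/-- The graph of the distributional curl over the fields with vorticity in `L¹ ∩ L^∞`. The
vorticities are recorded as elements of `L²`, which makes the graph a subset of a Polish space. -/
def vorticityGraph : Set (Lp E 2 (volume : Measure E) × Lp ℝ 2 (volume : Measure E)) :=
  {z | IsDistributionalVorticity z.1 z.2 ∧ MemLp z.2 1 ∧ MemLp z.2 ∞}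

theorem measurableSet_vorticityGraph
    [MeasurableSpace (Lp E 2 (volume : Measure E))]
    [OpensMeasurableSpace (Lp E 2 (volume : Measure E))]
    [MeasurableSpace (Lp ℝ 2 (volume : Measure E))]
    [OpensMeasurableSpace (Lp ℝ 2 (volume : Measure E))] :
    MeasurableSet vorticityGraph := by
  -- `L²` is second countable, so open sets of the product lie in the product σ-algebra.
  have : Fact ((2 : ℝ≥0∞) ≠ ∞) := ⟨ofNat_ne_top⟩
  have hmemLp (q : ℝ≥0∞) : MeasurableSet {z : Lp E 2 (volume : Measure E) ×
      Lp ℝ 2 (volume : Measure E) | MemLp z.2 q} :=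
    measurable_snd (measurableSet_setOf_memLp_coeFn q)
  exact isClosed_setOf_isDistributionalVorticity.measurableSet.inter
    ((hmemLp 1).inter (hmemLp ∞))

theorem injOn_fst_vorticityGraph : vorticityGraph.InjOn Prod.fst := by
  rintro ⟨u, ω⟩ ⟨h, -⟩ ⟨u', ω'⟩ ⟨h', -⟩ (rfl : u = u')
  have hloc (f : Lp ℝ 2 (volume : Measure E)) : LocallyIntegrable f :=
    (Lp.memLp f).locallyIntegrable one_le_two
  exact congrArg (Prod.mk u) (Lp.ext (h.ae_eq h' (hloc ω) (hloc ω')))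

theorem vorticityLpNorm_eq_iInf (p : ℝ≥0∞) (u : Lp E 2 (volume : Measure E)) :
    vorticityLpNorm p u = ⨅ (ω) (_ : (u, ω) ∈ vorticityGraph), eLpNorm ω p volume := by
  apply le_antisymm
  · exact le_iInf₂ fun ω ⟨h, hω₁, hω⟩ =>
      (h.vorticityLpNorm_eq (memLp_one_iff_integrable.1 hω₁) hω p).le
  by_cases hex : ∃ ω : E → ℝ, Integrable ω (volume : Measure E) ∧
      MemLp ω ∞ (volume : Measure E) ∧ IsDistributionalVorticity u ω
  · obtain ⟨ω, hω₁, hω, h⟩ := hex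
    have hω₁' : MemLp ω 1 := memLp_one_iff_integrable.2 hω₁
    have hω₂ : MemLp ω 2 := memLp_of_memLp_of_memLp_top one_ne_zero one_le_two hω₁' hω
    have hae : ω =ᵐ[volume] hω₂.toLp ω := hω₂.coeFn_toLp.symm
    rw [h.vorticityLpNorm_eq hω₁ hω, eLpNorm_congr_ae hae]
    exact iInf₂_le _ ⟨h.congr_ae hae, hω₁'.ae_eq hae, hω.ae_eq hae⟩
  · rw [vorticityLpNorm, dif_neg hex]
    exact le_top

end VorticityGraph

theorem vorticityLpNorm_measurable_general (p : ℝ≥0∞) :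
    Measurable[borel (Lp E 2 (volume : Measure E))] (vorticityLpNorm p) := by
  borelize ↥(Lp E 2 (volume : Measure E))
  borelize ↥(Lp ℝ 2 (volume : Measure E))
  have : Fact ((2 : ℝ≥0∞) ≠ ∞) := ⟨ofNat_ne_top⟩
  rw [funext (vorticityLpNorm_eq_iInf p)]
  exact measurable_iInf_of_injOn_fst measurableSet_vorticityGraph injOn_fst_vorticityGraph
    ((measurable_eLpNorm_coeFn p).comp measurable_snd)

/-- For every `1 ≤ p ≤ ∞`, the map sending a square-integrable vector field on
`ℝ²` to the `L^p` norm of its vorticity (extended by `∞` off the Yudovich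
class) is Borel measurable on `L²(ℝ²;ℝ²)`. -/
theorem vorticityLpNorm_measurable (p : ℝ≥0∞) (hp : 1 ≤ p) :
    Measurable[borel (Lp E 2 (volume : Measure E))] (vorticityLpNorm p) :=
  vorticityLpNorm_measurable_general p
end
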